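/- arXiv:2506.12416 — 8 statements merged into one kernel-verified Lean document; each statement's English description precedes it below -/
import Mathlib

section
/- There exists a finite type γ and a joint distribution Q : α × β × γ → ℝ (nonnegative, summing to 1) satisfying consistency, informativeness, and perfect secrecy if and only if for every y ∈ β one has ∑_{x ∈ α} P(x,y)/P_X(x) ≤ 1 (i.e., the matrix of conditional probabilities P_{Y|X}(y|x) is column-substochastic). -/
/-- Alice can construct a public signal `Z` (a finite type `γ` with joint
distribution `Q`) satisfying consistency, informativeness, and perfect
secrecy if and only if the matrix of conditional probabilities
`P_{Y|X}(y|x) = P(x,y) / P_X(x)` is column-substochastic. -/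
theorem secret_communication_iff_column_substochastic
    {α β : Type} [Fintype α] [Fintype β] [Nonempty α] [Nonempty β]
    (P : α × β → ℝ)
    (hP0 : ∀ x y, 0 ≤ P (x, y))
    (hP1 : ∑ x : α, ∑ y : β, P (x, y) = 1)
    (hPX : ∀ x : α, 0 < ∑ y : β, P (x, y)) :
    (∃ (γ : Type) (_ : Fintype γ) (Q : α × β × γ → ℝ),
      (∀ x y z, 0 ≤ Q (x, y, z)) ∧
      (∑ x : α, ∑ y : β, ∑ z : γ, Q (x, y, z)) = 1 ∧
      -- consistency
      (∀ x y, ∑ z : γ, Q (x, y, z) = P (x, y)) ∧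
      -- informativeness
      (∀ (y : β) (z : γ) (x x' : α),
        0 < Q (x, y, z) → 0 < Q (x', y, z) → x = x') ∧
      -- perfect secrecy
      (∀ (x : α) (z : γ), ∑ y : β, Q (x, y, z) =
        (∑ y : β, P (x, y)) * (∑ x' : α, ∑ y : β, Q (x', y, z)))) ↔
    (∀ y : β, ∑ x : α, P (x, y) / (∑ y' : β, P (x, y')) ≤ 1) := by
  classical
  constructor
  · rintro ⟨γ, _, Q, h0, h1, hc, hi, hs⟩ y
    have key : ∀ z, ∑ x : α, Q (x, y, z) / (∑ y' : β, P (x, y')) ≤ ∑ x' : α, ∑ y : β, Q (x', y, z) := by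
      intro z
      have hQZ : 0 ≤ ∑ x' : α, ∑ y : β, Q (x', y, z) :=
        Finset.sum_nonneg fun x _ => Finset.sum_nonneg fun y _ => h0 x y z
      by_cases hx : ∃ x, 0 < Q (x, y, z)
      · obtain ⟨x, hx⟩ := hx
        rw [Finset.sum_eq_single x]
        · rw [div_le_iff₀ (hPX x), mul_comm, ← hs x z]
          exact Finset.single_le_sum (f := fun y => Q (x, y, z)) (fun y _ => h0 x y z) (Finset.mem_univ y)
        · intro x' _ hne
          have : Q (x', y, z) = 0 := by
            by_contra hq
            exact hne (hi y z x' x (lt_of_le_of_ne (h0 x' y z) (Ne.symm hq)) hx)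
          simp [this]
        · simp
      · push Not at hx
        have : ∀ x, Q (x, y, z) = 0 := fun x => le_antisymm (hx x) (h0 x y z)
        simpa [this] using hQZ
    calc ∑ x : α, P (x, y) / (∑ y' : β, P (x, y'))
        = ∑ z, ∑ x : α, Q (x, y, z) / (∑ y' : β, P (x, y')) := by
          rw [Finset.sum_comm]
          refine Finset.sum_congr rfl fun x _ => ?_
          rw [← Finset.sum_div, hc]
      _ ≤ ∑ z, ∑ x' : α, ∑ y : β, Q (x', y, z) := Finset.sum_le_sum fun z _ => key z
      _ = 1 := by
          rw [← h1, Finset.sum_comm]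
          exact Finset.sum_congr rfl fun x _ => Finset.sum_comm
  · intro h
    set p : α → ℝ := fun x => ∑ y : β, P (x, y) with hp
    set W : α → β → ℝ := fun x y => P (x, y) / p x with hW
    have hW0 : ∀ x y, 0 ≤ W x y := fun x y => div_nonneg (hP0 x y) (hPX x).le
    have hWr : ∀ x, ∑ y, W x y = 1 := fun x => by
      simp only [hW]
      rw [← Finset.sum_div]
      exact div_self (hPX x).ne'
    have hWc : ∀ y, ∑ x, W x y ≤ 1 := h
    have hpW : ∀ x y, p x * W x y = P (x, y) := fun x y => mul_div_cancel₀ _ (hPX x).ne'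
    let M : Matrix (α ⊕ β) (α ⊕ β) ℝ := Matrix.fromBlocks 0 (Matrix.of W) (Matrix.of W).transpose
      (Matrix.diagonal fun y => 1 - ∑ x, W x y)
    have hM : M ∈ doublyStochastic ℝ (α ⊕ β) := by
      rw [mem_doublyStochastic_iff_sum]
      refine ⟨?_, ?_, ?_⟩
      · rintro (x | y) (x' | y')
        · simp [M]
        · simpa [M] using hW0 x y'
        · simpa [M] using hW0 x' y
        · simp only [M, Matrix.fromBlocks_apply₂₂, Matrix.diagonal_apply]
          split_ifs
          · linarith [hWc y]
          · exact le_rfl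
      · rintro (x | y)
        · simpa [M] using hWr x
        · simp [M, Matrix.diagonal_apply]
      · rintro (x | y)
        · simpa [M] using hWr x
        · simp [M, Matrix.diagonal_apply]
    obtain ⟨w, w0, w1, hw⟩ := exists_eq_sum_perm_of_mem_doublyStochastic hM
    have hent : ∀ i j, ∑ σ : Equiv.Perm (α ⊕ β), (if σ i = j then w σ else 0) = M i j := by
      intro i j
      rw [← hw, Matrix.sum_apply]
      refine Finset.sum_congr rfl fun σ _ => ?_
      simp [Equiv.Perm.permMatrix, PEquiv.toMatrix_apply, eq_comm]
    have hz : ∀ σ x x', σ (Sum.inl x) = Sum.inl x' → w σ = 0 := by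
      intro σ x x' he
      have h2 : ∑ σ : Equiv.Perm (α ⊕ β), (if σ (Sum.inl x) = Sum.inl x' then w σ else 0) = 0 := by
        rw [hent]; simp [M]
      rw [Finset.sum_eq_zero_iff_of_nonneg] at h2
      · simpa [he] using h2 σ (Finset.mem_univ _)
      · intro σ _
        split_ifs
        · exact w0 σ
        · exact le_rfl
    let Q : α × β × Equiv.Perm (α ⊕ β) → ℝ := fun t =>
      p t.1 * (if t.2.2 (Sum.inl t.1) = Sum.inr t.2.1 then w t.2.2 else 0)
    have hc : ∀ x y, ∑ σ, Q (x, y, σ) = P (x, y) := by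
      intro x y
      simp only [Q]
      rw [← Finset.mul_sum, hent, ← hpW]
      simp [M]
    have hsum : ∀ x σ, ∑ y, Q (x, y, σ) = p x * w σ := by
      intro x σ
      simp only [Q]
      rw [← Finset.mul_sum]
      congr 1
      rcases he : σ (Sum.inl x) with x' | y
      · simp [hz σ x x' he]
      · simp
    refine ⟨Equiv.Perm (α ⊕ β), inferInstance, Q, ?_, ?_, hc, ?_, ?_⟩
    · intro x y σ
      refine mul_nonneg (hPX x).le ?_
      dsimp only
      split_ifs
      · exact w0 σ
      · exact le_rfl
    · simp only [hc]; exact hP1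
    · intro y σ x x' hx hx'
      have e : ∀ x, 0 < Q (x, y, σ) → σ (Sum.inl x) = Sum.inr y := by
        intro x hx
        by_contra hne
        simp [Q, hne] at hx
      exact Sum.inl_injective (σ.injective ((e x hx).trans (e x' hx').symm))
    · intro x σ
      simp only [hsum]
      rw [← Finset.sum_mul]
      simp only [hp]
      rw [hP1, one_mul]
end

section
/- (Necessity) If there exist a finite type γ and a joint distribution Q : α × β × γ → ℝ (nonnegative, summing to 1) satisfying consistency, informativeness, and perfect secrecy, then for every y ∈ β one has ∑_{x ∈ α} P(x,y)/P_X(x) ≤ 1. -/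
/-- (Necessity) If there is a finite public-signal type `γ` and a joint
distribution `Q` satisfying consistency, informativeness, and perfect
secrecy, then the matrix of conditionals `P_{Y|X}` is column-substochastic. -/
theorem necessity_column_substochastic
    {α β : Type} [Fintype α] [Fintype β] [Nonempty α] [Nonempty β]
    (P : α × β → ℝ)
    (hP0 : ∀ x y, 0 ≤ P (x, y))
    (hP1 : ∑ x : α, ∑ y : β, P (x, y) = 1)
    (hPX : ∀ x : α, 0 < ∑ y : β, P (x, y))
    (h : ∃ (γ : Type) (_ : Fintype γ) (Q : α × β × γ → ℝ),
      (∀ x y z, 0 ≤ Q (x, y, z)) ∧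
      (∑ x : α, ∑ y : β, ∑ z : γ, Q (x, y, z)) = 1 ∧
      -- consistency
      (∀ x y, ∑ z : γ, Q (x, y, z) = P (x, y)) ∧
      -- informativeness
      (∀ (y : β) (z : γ) (x x' : α),
        0 < Q (x, y, z) → 0 < Q (x', y, z) → x = x') ∧
      -- perfect secrecy
      (∀ (x : α) (z : γ), ∑ y : β, Q (x, y, z) =
        (∑ y : β, P (x, y)) * (∑ x' : α, ∑ y : β, Q (x', y, z)))) :
    ∀ y : β, ∑ x : α, P (x, y) / (∑ y' : β, P (x, y')) ≤ 1 := by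
  obtain ⟨γ, _, Q, h0, h1, hc, hi, hs⟩ := h
  intro y
  have key : ∀ z : γ, ∑ x : α, Q (x, y, z) / (∑ y' : β, P (x, y')) ≤
      ∑ x' : α, ∑ y' : β, Q (x', y', z) := by
    intro z
    by_cases hx : ∃ x, 0 < Q (x, y, z)
    · obtain ⟨x, hx⟩ := hx
      rw [Finset.sum_eq_single x]
      · rw [div_le_iff₀ (hPX x), mul_comm, ← hs x z]
        exact Finset.single_le_sum (f := fun y' => Q (x, y', z))
          (fun y' _ => h0 x y' z) (Finset.mem_univ y)
      · intro b _ hb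
        have : Q (b, y, z) = 0 := by
          by_contra hne
          exact hb (hi y z b x (lt_of_le_of_ne (h0 b y z) (Ne.symm hne)) hx)
        rw [this, zero_div]
      · intro hn
        exact absurd (Finset.mem_univ x) hn
    · have hz : ∀ x, Q (x, y, z) = 0 := by
        intro x
        by_contra hne
        exact hx ⟨x, lt_of_le_of_ne (h0 x y z) (Ne.symm hne)⟩
      simp only [hz, zero_div, Finset.sum_const_zero]
      exact Finset.sum_nonneg fun x _ => Finset.sum_nonneg fun y' _ => h0 x y' z
  calc ∑ x : α, P (x, y) / (∑ y' : β, P (x, y'))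
      = ∑ x : α, ∑ z : γ, Q (x, y, z) / (∑ y' : β, P (x, y')) := by
        refine Finset.sum_congr rfl fun x _ => ?_
        rw [← Finset.sum_div, hc x y]
    _ = ∑ z : γ, ∑ x : α, Q (x, y, z) / (∑ y' : β, P (x, y')) := Finset.sum_comm
    _ ≤ ∑ z : γ, ∑ x' : α, ∑ y' : β, Q (x', y', z) :=
        Finset.sum_le_sum fun z _ => key z
    _ = 1 := by
        rw [← h1, Finset.sum_comm]
        exact Finset.sum_congr rfl fun x _ => Finset.sum_comm
end

section
/- (Sufficiency) If for every y ∈ β one has ∑_{x ∈ α} P(x,y)/P_X(x) ≤ 1, then there exist a finite type γ and a joint distribution Q : α × β × γ → ℝ (nonnegative, summing to 1) satisfying consistency, informativeness, and perfect secrecy. -/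
/-- (Sufficiency) If the matrix of conditionals `P_{Y|X}` is
column-substochastic, then there is a finite public-signal type `γ` and a
joint distribution `Q` satisfying consistency, informativeness, and perfect
secrecy. -/
theorem sufficiency_column_substochastic
    {α β : Type} [Fintype α] [Fintype β] [Nonempty α] [Nonempty β]
    (P : α × β → ℝ)
    (hP0 : ∀ x y, 0 ≤ P (x, y))
    (hP1 : ∑ x : α, ∑ y : β, P (x, y) = 1)
    (hPX : ∀ x : α, 0 < ∑ y : β, P (x, y))
    (h : ∀ y : β, ∑ x : α, P (x, y) / (∑ y' : β, P (x, y')) ≤ 1) :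
    ∃ (γ : Type) (_ : Fintype γ) (Q : α × β × γ → ℝ),
      (∀ x y z, 0 ≤ Q (x, y, z)) ∧
      (∑ x : α, ∑ y : β, ∑ z : γ, Q (x, y, z)) = 1 ∧
      -- consistency
      (∀ x y, ∑ z : γ, Q (x, y, z) = P (x, y)) ∧
      -- informativeness
      (∀ (y : β) (z : γ) (x x' : α),
        0 < Q (x, y, z) → 0 < Q (x', y, z) → x = x') ∧
      -- perfect secrecy
      (∀ (x : α) (z : γ), ∑ y : β, Q (x, y, z) =
        (∑ y : β, P (x, y)) * (∑ x' : α, ∑ y : β, Q (x', y, z))) := by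
  classical
  set p : α → ℝ := fun x => ∑ y : β, P (x, y) with hp
  let W : α → β → ℝ := fun x y => P (x, y) / p x
  have hW0 : ∀ x y, 0 ≤ W x y := fun x y => div_nonneg (hP0 x y) (hPX x).le
  have hW1 : ∀ x, ∑ y, W x y = 1 := by
    intro x
    simp only [W]
    rw [← Finset.sum_div]
    exact div_self (hPX x).ne'
  have hpW : ∀ x y, p x * W x y = P (x, y) := fun x y => mul_div_cancel₀ _ (hPX x).ne'
  have hWc : ∀ y, ∑ x, W x y ≤ 1 := h
  let D : Matrix β β ℝ := Matrix.diagonal fun y => 1 - ∑ x, W x y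
  let M : Matrix (α ⊕ β) (α ⊕ β) ℝ :=
    Matrix.fromBlocks 0 (Matrix.of W) (Matrix.of fun y x => W x y) D
  have hM : M ∈ doublyStochastic ℝ (α ⊕ β) := by
    rw [mem_doublyStochastic_iff_sum]
    refine ⟨?_, ?_, ?_⟩
    · rintro (x | y) (x' | y')
      · simp [M]
      · simpa [M] using hW0 x y'
      · simpa [M] using hW0 x' y
      · simp only [M, D, Matrix.fromBlocks_apply₂₂, Matrix.diagonal_apply]
        split_ifs
        · linarith [hWc y]
        · exact le_rfl
    · rintro (x | y)
      · simp [M, Fintype.sum_sum_type, hW1]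
      · simp [M, D, Fintype.sum_sum_type, Matrix.diagonal_apply]
    · rintro (x | y)
      · simp [M, Fintype.sum_sum_type, hW1]
      · simp [M, D, Fintype.sum_sum_type, Matrix.diagonal_apply]
  obtain ⟨w, hw0, hw1, hwM⟩ := exists_eq_sum_perm_of_mem_doublyStochastic hM
  have hent : ∀ i j, ∑ σ : Equiv.Perm (α ⊕ β), (if σ i = j then w σ else 0) = M i j := by
    intro i j
    rw [← hwM, Matrix.sum_apply]
    refine Finset.sum_congr rfl fun σ _ => ?_
    simp [Equiv.Perm.permMatrix, PEquiv.toMatrix_apply, eq_comm]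
  have hz : ∀ (x x' : α) (σ : Equiv.Perm (α ⊕ β)), σ (Sum.inl x) = Sum.inl x' → w σ = 0 := by
    intro x x' σ hσ
    have h1 := hent (Sum.inl x) (Sum.inl x')
    have h2 : M (Sum.inl x) (Sum.inl x') = 0 := by simp [M]
    rw [h2, Finset.sum_eq_zero_iff_of_nonneg] at h1
    · simpa [hσ] using h1 σ (Finset.mem_univ _)
    · intro τ _
      split_ifs
      · exact hw0 τ
      · exact le_rfl
  have hrow : ∀ (x : α) (σ : Equiv.Perm (α ⊕ β)),
      ∑ y : β, (if σ (Sum.inl x) = Sum.inr y then w σ else 0) = w σ := by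
    intro x σ
    rcases hσ : σ (Sum.inl x) with x' | y'
    · simp [hz x x' σ hσ]
    · simp
  let Q : α × β × Equiv.Perm (α ⊕ β) → ℝ := fun t =>
    p t.1 * (if t.2.2 (Sum.inl t.1) = Sum.inr t.2.1 then w t.2.2 else 0)
  have hcons : ∀ x y, ∑ z, Q (x, y, z) = P (x, y) := by
    intro x y
    simp only [Q]
    rw [← Finset.mul_sum, hent, ← hpW x y]
    simp [M]
  have hQrow : ∀ x z, ∑ y, Q (x, y, z) = p x * w z := by
    intro x z
    simp only [Q]
    rw [← Finset.mul_sum, hrow]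
  have hpos : ∀ x y z, 0 < Q (x, y, z) → z (Sum.inl x) = Sum.inr y := by
    intro x y z hq
    by_contra hne
    simp [Q, hne] at hq
  refine ⟨Equiv.Perm (α ⊕ β), inferInstance, Q, ?_, ?_, hcons, ?_, ?_⟩
  · intro x y z
    refine mul_nonneg (hPX x).le ?_
    dsimp only
    split_ifs
    · exact hw0 z
    · exact le_rfl
  · simp only [hcons]
    exact hP1
  · intro y z x x' h1 h2
    exact Sum.inl_injective (z.injective ((hpos x y z h1).trans (hpos x' y z h2).symm))
  · intro x z
    simp only [hQrow]
    rw [← Finset.sum_mul, show ∑ x, p x = 1 from hP1, one_mul]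
end

section
/- Let M be an n × m real matrix with nonnegative entries that is row-stochastic and column-substochastic, and suppose n < m. Define the row vector r = (1_m^T − 1_n^T M)/(m − n), where 1_m and 1_n are all-ones vectors, and let M_ext be the m × m matrix obtained by appending m − n copies of r as additional rows to M. Then all entries of M_ext are nonnegative, and M_ext is doubly stochastic: every row and every column of M_ext sums to 1. -/
/-- Extending a row-stochastic, column-substochastic `n × m` matrix (with
`n < m`) by `m - n` copies of the row `r = (1ₘᵀ − 1ₙᵀ M)/(m − n)` yields a
doubly stochastic `m × m` matrix. -/
theorem extension_doubly_stochastic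
    {n m : ℕ} (hnm : n < m) (M : Matrix (Fin n) (Fin m) ℝ)
    (hM0 : ∀ i j, 0 ≤ M i j)
    (hrow : ∀ i, ∑ j : Fin m, M i j = 1)
    (hcol : ∀ j, ∑ i : Fin n, M i j ≤ 1) :
    ∀ (r : Fin m → ℝ), r = (fun j => (1 - ∑ i : Fin n, M i j) / ((m : ℝ) - n)) →
    ∀ (Mext : Matrix (Fin m) (Fin m) ℝ),
      Mext = (fun (i j : Fin m) => if h : (i : ℕ) < n then M ⟨i, h⟩ j else r j) →
    (∀ i j, 0 ≤ Mext i j) ∧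
    (∀ i, ∑ j : Fin m, Mext i j = 1) ∧
    (∀ j, ∑ i : Fin m, Mext i j = 1) := by
  intro r hr Mext hMext
  have hpos : (0 : ℝ) < (m : ℝ) - n := sub_pos.mpr (by exact_mod_cast hnm)
  have hr0 : ∀ j, 0 ≤ r j := by
    intro j
    rw [hr]
    exact div_nonneg (sub_nonneg.mpr (hcol j)) hpos.le
  have hr1 : ∑ j, r j = 1 := by
    rw [hr, ← Finset.sum_div, Finset.sum_sub_distrib, Finset.sum_comm]
    simp only [hrow]
    simp only [Finset.sum_const, Finset.card_univ, Fintype.card_fin, nsmul_eq_mul, mul_one]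
    exact div_self hpos.ne'
  refine ⟨?_, ?_, ?_⟩
  · intro i j
    rw [hMext]
    dsimp only
    split_ifs with h
    · exact hM0 _ _
    · exact hr0 j
  · intro i
    rw [hMext]
    by_cases h : (i : ℕ) < n
    · simp only [h, dite_true]
      exact hrow _
    · simp only [h, dite_false]
      exact hr1
  · intro j
    have hrj : ((m : ℝ) - n) * r j = 1 - ∑ i : Fin n, M i j := by
      rw [hr]
      exact mul_div_cancel₀ _ hpos.ne'
    rw [hMext]
    clear hMext hr hr0 hr1 hrow hcol hM0
    obtain ⟨k, rfl⟩ := Nat.exists_eq_add_of_le hnm.le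
    rw [Fin.sum_univ_add]
    simp only [Fin.val_castAdd, Fin.is_lt, dite_true, Fin.val_natAdd, Fin.eta,
      show ∀ x : ℕ, ¬ (n + x < n) from fun x => by omega, dite_false, Finset.sum_const,
      Finset.card_univ, Fintype.card_fin, nsmul_eq_mul]
    push_cast at hrj
    linarith
end

section
/- (Perfect secrecy of the Birkhoff construction) Suppose f : β → Fin m is a bijection, e : α → Fin m is an injection, α_1, …, α_p > 0 sum to 1, each σ_k is a permutation of Fin m with associated permutation matrix Π^{(k)} (Π^{(k)}_{ij} = 1 if σ_k(i) = j and 0 otherwise), and p_X : α → ℝ is a probability vector (nonnegative, summing to 1). Define Q : α × β × Fin p → ℝ by Q(x, y, k) = α_k · p_X(x) · Π^{(k)}_{e(x), f(y)}. Then for every x ∈ α and k ∈ Fin p, the marginal Q_XZ(x,k) := ∑_y Q(x,y,k) equals α_k · p_X(x), which equals Q_Z(k) · p_X(x) where Q_Z(k) := ∑_{x,y} Q(x,y,k); that is, X and Z are independent under Q. -/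
/-- (Perfect secrecy of the Birkhoff construction) For the constructed
`Q(x,y,k) = αₖ · p_X(x) · Π⁽ᵏ⁾_{e(x),f(y)}`, the `XZ`-marginal factorizes:
`Q_XZ(x,k) = αₖ · p_X(x) = Q_Z(k) · p_X(x)`, i.e. `X` and `Z` are
independent. -/
theorem birkhoff_construction_perfect_secrecy
    {α β : Type} [Fintype α] [Fintype β] [Nonempty α] [Nonempty β]
    {m p : ℕ}
    (pX : α → ℝ) (hpX0 : ∀ x, 0 ≤ pX x) (hpX1 : ∑ x : α, pX x = 1)
    (a : Fin p → ℝ) (ha : ∀ k, 0 < a k) (hasum : ∑ k : Fin p, a k = 1)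
    (σ : Fin p → Equiv.Perm (Fin m))
    (e : α → Fin m) (he : Function.Injective e)
    (f : β → Fin m) (hf : Function.Bijective f) :
    ∀ (Q : α × β × Fin p → ℝ),
      Q = (fun q =>
        a q.2.2 * pX q.1 *
          (if σ q.2.2 (e q.1) = f q.2.1 then (1 : ℝ) else 0)) →
    ∀ (x : α) (k : Fin p),
      (∑ y : β, Q (x, y, k)) = a k * pX x ∧
      a k * pX x = (∑ x' : α, ∑ y : β, Q (x', y, k)) * pX x := by
  intro Q hQ x k
  have key : ∀ x' : α, (∑ y : β, Q (x', y, k)) = a k * pX x' := by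
    intro x'
    subst hQ
    have h := hf.sum_comp (fun j => a k * pX x' * (if σ k (e x') = j then (1 : ℝ) else 0))
    refine h.trans ?_
    rw [← Finset.mul_sum]
    simp
  refine ⟨key x, ?_⟩
  simp only [key]
  rw [← Finset.mul_sum, hpX1, mul_one]
end

section
/- (Lower bound on revealing-signal probability) Let γ be a finite type and Q : α × β × γ → ℝ a nonnegative function summing to 1 that satisfies consistency (∑_z Q(x,y,z) = P(x,y) for all x,y) and perfect secrecy (Q_XZ(x,z) = P_X(x)·Q_Z(z) for all x,z, where Q_XZ(x,z) = ∑_y Q(x,y,z) and Q_Z(z) = ∑_{x,y} Q(x,y,z)). For x ∈ α, y ∈ β define φ(x,y) = { z ∈ γ : Q(x,y,z) > 0 }. Then for every x ∈ α and y ∈ β, P(x,y)/P_X(x) ≤ ∑_{z ∈ φ(x,y)} Q_Z(z). -/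
/-- (Lower bound on revealing-signal probability) Under consistency and
perfect secrecy, the signals revealing `x` when combined with `y` have
total probability at least `P(x,y)/P_X(x)`. -/
theorem revealing_signal_probability_lower_bound
    {α β : Type} [Fintype α] [Fintype β] [Nonempty α] [Nonempty β]
    (P : α × β → ℝ)
    (hP0 : ∀ x y, 0 ≤ P (x, y))
    (hP1 : ∑ x : α, ∑ y : β, P (x, y) = 1)
    (hPX : ∀ x : α, 0 < ∑ y : β, P (x, y))
    {γ : Type} [Fintype γ]
    (Q : α × β × γ → ℝ)
    (hQ0 : ∀ x y z, 0 ≤ Q (x, y, z))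
    (hQ1 : ∑ x : α, ∑ y : β, ∑ z : γ, Q (x, y, z) = 1)
    -- consistency
    (hcons : ∀ x y, ∑ z : γ, Q (x, y, z) = P (x, y))
    -- perfect secrecy
    (hsecr : ∀ (x : α) (z : γ), ∑ y : β, Q (x, y, z) =
      (∑ y : β, P (x, y)) * (∑ x' : α, ∑ y : β, Q (x', y, z))) :
    ∀ (x : α) (y : β),
      P (x, y) / (∑ y' : β, P (x, y')) ≤
        ∑ z ∈ Finset.univ.filter (fun z : γ => 0 < Q (x, y, z)),
          (∑ x' : α, ∑ y' : β, Q (x', y', z)) := by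
  intro x y
  rw [div_le_iff₀ (hPX x), Finset.sum_mul, ← hcons x y, Finset.sum_filter]
  apply Finset.sum_le_sum
  intro z _
  split_ifs with h
  · rw [mul_comm, ← hsecr x z]
    exact Finset.single_le_sum (f := fun y => Q (x, y, z))
      (fun y _ => hQ0 x y z) (Finset.mem_univ y)
  · exact not_lt.mp h
end

section
/- (Shannon's perfect secrecy theorem) Suppose the joint distribution P : α × β → ℝ satisfies P(x,y) = P_X(x)/m for all x ∈ α, y ∈ β, where m is the cardinality of β (i.e., Y is uniform on β and independent of X). Then there exist a finite type γ and a joint distribution Q : α × β × γ → ℝ (nonnegative, summing to 1) satisfying consistency, informativeness, and perfect secrecy if and only if the cardinality of α is at most the cardinality of β. -/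
/-- (Shannon's perfect secrecy theorem) If `Y` is uniform and independent
of `X`, i.e. `P(x,y) = P_X(x)/m` with `m = #β`, then a public signal
satisfying consistency, informativeness, and perfect secrecy exists iff
`#α ≤ #β`. -/
theorem shannon_perfect_secrecy
    {α β : Type} [Fintype α] [Fintype β] [Nonempty α] [Nonempty β]
    (P : α × β → ℝ)
    (hP0 : ∀ x y, 0 ≤ P (x, y))
    (hP1 : ∑ x : α, ∑ y : β, P (x, y) = 1)
    (hPX : ∀ x : α, 0 < ∑ y : β, P (x, y))
    (huniform : ∀ (x : α) (y : β),
      P (x, y) = (∑ y' : β, P (x, y')) / (Fintype.card β : ℝ)) :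
    (∃ (γ : Type) (_ : Fintype γ) (Q : α × β × γ → ℝ),
      (∀ x y z, 0 ≤ Q (x, y, z)) ∧
      (∑ x : α, ∑ y : β, ∑ z : γ, Q (x, y, z)) = 1 ∧
      -- consistency
      (∀ x y, ∑ z : γ, Q (x, y, z) = P (x, y)) ∧
      -- informativeness
      (∀ (y : β) (z : γ) (x x' : α),
        0 < Q (x, y, z) → 0 < Q (x', y, z) → x = x') ∧
      -- perfect secrecy
      (∀ (x : α) (z : γ), ∑ y : β, Q (x, y, z) =
        (∑ y : β, P (x, y)) * (∑ x' : α, ∑ y : β, Q (x', y, z)))) ↔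
    Fintype.card α ≤ Fintype.card β := by
  classical
  constructor
  · rintro ⟨γ, _, Q, h0, h1, hc, hi, hs⟩
    obtain ⟨z, hz⟩ : ∃ z, 0 < ∑ x' : α, ∑ y : β, Q (x', y, z) := by
      by_contra! h
      have h2 : ∑ z : γ, ∑ x' : α, ∑ y : β, Q (x', y, z) ≤ 0 :=
        Finset.sum_nonpos fun z _ => h z
      have h3 : ∑ z : γ, ∑ x' : α, ∑ y : β, Q (x', y, z) = 1 := by
        rw [← h1, Finset.sum_comm]
        exact Finset.sum_congr rfl fun x _ => Finset.sum_comm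
      linarith
    have hex : ∀ x, ∃ y, 0 < Q (x, y, z) := by
      intro x
      by_contra! h
      have h2 : ∑ y : β, Q (x, y, z) ≤ 0 := Finset.sum_nonpos fun y _ => h y
      have h3 := mul_pos (hPX x) hz
      rw [← hs x z] at h3
      linarith
    choose f hf using hex
    refine Fintype.card_le_of_injective f fun x x' h => ?_
    refine hi (f x) z x x' (hf x) ?_
    rw [h]
    exact hf x'
  · intro hcard
    obtain ⟨f⟩ := Function.Embedding.nonempty_of_card_le hcard
    have : NeZero (Fintype.card β) := ⟨Fintype.card_ne_zero⟩
    let e := Fintype.equivFin β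
    have hc : ∀ x y, ∑ z : Fin (Fintype.card β),
        (if e y + z = e (f x) then P (x, y) else 0) = P (x, y) := by
      intro x y
      have : ∀ z, (e y + z = e (f x)) ↔ z = e (f x) - e y := fun z => by
        rw [eq_sub_iff_add_eq, add_comm]
      simp [this]
    have hX : ∀ x (z : Fin (Fintype.card β)), ∑ y : β,
        (if e y + z = e (f x) then P (x, y) else 0)
          = (∑ y : β, P (x, y)) / (Fintype.card β : ℝ) := by
      intro x z
      have : ∀ y, (e y + z = e (f x)) ↔ y = e.symm (e (f x) - z) := fun y => by
        rw [Equiv.eq_symm_apply, eq_sub_iff_add_eq]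
      simp only [this, Finset.sum_ite_eq', Finset.mem_univ, if_true]
      exact huniform _ _
    refine ⟨Fin (Fintype.card β), inferInstance,
      fun p => if e p.2.1 + p.2.2 = e (f p.1) then P (p.1, p.2.1) else 0, ?_, ?_, ?_, ?_, ?_⟩
    · intro x y z
      dsimp only
      split_ifs
      · exact hP0 x y
      · exact le_rfl
    · simp only [hc]
      exact hP1
    · exact hc
    · intro y z x x' h h'
      dsimp only at h h'
      split_ifs at h h' with h1 h2
      · exact f.injective (e.injective (h1.symm.trans h2))
      all_goals first | exact absurd h (lt_irrefl _) | exact absurd h' (lt_irrefl _)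
    · intro x z
      simp only [hX]
      rw [← Finset.sum_div, hP1, mul_one_div]
end

section
/- (Key necessity inequality) Let γ be a finite type and Q : α × β × γ → ℝ a nonnegative function summing to 1 that satisfies informativeness (for every (y,z) there is at most one x with Q(x,y,z) > 0) and perfect secrecy (Q_XZ(x,z) = P_X(x)·Q_Z(z) for all x,z, where Q_XZ(x,z) = ∑_y Q(x,y,z) and Q_Z(z) = ∑_{x,y} Q(x,y,z)). For x ∈ α, y ∈ β define φ(x,y) = { z ∈ γ : Q(x,y,z) > 0 }. Then for every y ∈ β, ∑_{x ∈ α} ∑_{z ∈ φ(x,y)} Q_Z(z) ≤ 1. -/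
/-- (Key necessity inequality) Under informativeness and perfect secrecy,
for each `y` the total probability of the revealing signals `φ(x,y)`,
summed over `x`, is at most 1. -/
theorem revealing_signal_probability_sum_le_one
    {α β : Type} [Fintype α] [Fintype β] [Nonempty α] [Nonempty β]
    (P : α × β → ℝ)
    (hP0 : ∀ x y, 0 ≤ P (x, y))
    (hP1 : ∑ x : α, ∑ y : β, P (x, y) = 1)
    (hPX : ∀ x : α, 0 < ∑ y : β, P (x, y))
    {γ : Type} [Fintype γ]
    (Q : α × β × γ → ℝ)
    (hQ0 : ∀ x y z, 0 ≤ Q (x, y, z))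
    (hQ1 : ∑ x : α, ∑ y : β, ∑ z : γ, Q (x, y, z) = 1)
    -- informativeness
    (hinfo : ∀ (y : β) (z : γ) (x x' : α),
      0 < Q (x, y, z) → 0 < Q (x', y, z) → x = x')
    -- perfect secrecy
    (hsecr : ∀ (x : α) (z : γ), ∑ y : β, Q (x, y, z) =
      (∑ y : β, P (x, y)) * (∑ x' : α, ∑ y : β, Q (x', y, z))) :
    ∀ y : β,
      ∑ x : α, ∑ z ∈ Finset.univ.filter (fun z : γ => 0 < Q (x, y, z)),
        (∑ x' : α, ∑ y' : β, Q (x', y', z)) ≤ 1 := by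
  intro y
  have hz : ∑ z : γ, (∑ x' : α, ∑ y' : β, Q (x', y', z)) = 1 := by
    rw [← hQ1, Finset.sum_comm]
    refine Finset.sum_congr rfl fun x _ => ?_
    rw [Finset.sum_comm]
  rw [← hz]
  simp only [Finset.sum_filter]
  rw [Finset.sum_comm]
  refine Finset.sum_le_sum fun z _ => ?_
  have hn : 0 ≤ ∑ x' : α, ∑ y' : β, Q (x', y', z) :=
    Finset.sum_nonneg fun x _ => Finset.sum_nonneg fun y _ => hQ0 x y z
  by_cases h : ∃ x, 0 < Q (x, y, z)
  · obtain ⟨x, hx⟩ := h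
    rw [Finset.sum_eq_single x]
    · rw [if_pos hx]
    · intro b _ hb
      exact if_neg fun h => hb (hinfo y z b x h hx)
    · intro h
      exact absurd (Finset.mem_univ x) h
  · rw [Finset.sum_eq_zero]
    · exact hn
    · intro x _
      exact if_neg fun hx => h ⟨x, hx⟩
end
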